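/- arXiv:2403.00682 — 5 statements merged into one kernel-verified Lean document; each statement's English description precedes it below -/
import Mathlib

section
/- Let T be a real (n×m)-matrix of full rank m with m < n. If m ≥ 3, then the surface integral ∫_{S^{n−1}} ‖Tᵗη‖^{-2} dη over the unit sphere S^{n−1} of ℝⁿ is finite, and if m ≥ 5, then the surface integral ∫_{S^{n−1}} ‖Tᵗη‖^{-4} dη is finite, despite the singular integrands. -/
open MeasureTheory Metric Matrix

lemma aux_local (m k : ℕ) (hk : k < m) (R : ℝ) :
    ∫⁻ y in ball (0 : EuclideanSpace ℝ (Fin m)) R, (ENNReal.ofReal (‖y‖ ^ k))⁻¹ < ⊤ := by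
  have : Nonempty (Fin m) := ⟨⟨0, by omega⟩⟩
  have h1 : IntegrableOn (fun x : EuclideanSpace ℝ (Fin m) => (fun r : ℝ => (r ^ k)⁻¹) ‖x‖)
      (ball 0 R) volume := by
    rw [integrableOn_fun_norm_addHaar volume (f := fun r : ℝ => (r ^ k)⁻¹)]
    have h2 : IntegrableOn (fun y : ℝ => y ^ (m - 1 - k)) (Set.Ioo 0 R) :=
      ((by fun_prop : Continuous (fun y : ℝ => y ^ (m - 1 - k))).continuousOn.integrableOn_Icc
        (a := 0) (b := R)).mono_set Set.Ioo_subset_Icc_self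
    refine h2.congr_fun ?_ measurableSet_Ioo
    intro y hy
    have hy0 : y ≠ 0 := hy.1.ne'
    simp only [finrank_euclideanSpace, Fintype.card_fin, smul_eq_mul]
    rw [← div_eq_mul_inv, eq_div_iff (pow_ne_zero _ hy0), ← pow_add]
    congr 1
    omega
  have h3 := h1.lintegral_lt_top
  refine lt_of_le_of_lt (le_of_eq ?_) h3
  refine lintegral_congr_ae (ae_restrict_of_ae ?_)
  have : ∀ᵐ y : EuclideanSpace ℝ (Fin m), y ≠ 0 := by
    simp [ae_iff]
  filter_upwards [this] with y hy
  rw [ENNReal.ofReal_inv_of_pos (pow_pos (norm_pos_iff.2 hy) _)]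

lemma aux_ball (m n k : ℕ) (hk : k < m)
    (L : EuclideanSpace ℝ (Fin n) →L[ℝ] EuclideanSpace ℝ (Fin m))
    (hL : Function.Surjective L) :
    ∫⁻ x in ball (0 : EuclideanSpace ℝ (Fin n)) 1, (ENNReal.ofReal (‖L x‖ ^ k))⁻¹ < ⊤ := by
  let K := L.ker
  let g : EuclideanSpace ℝ (Fin n) →L[ℝ] K := K.orthogonalProjectionOnto
  let e : EuclideanSpace ℝ (Fin n) ≃L[ℝ] EuclideanSpace ℝ (Fin m) × K :=
    ContinuousLinearMap.equivProdOfSurjectiveOfIsCompl L g (LinearMap.range_eq_top.2 hL)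
      (LinearMap.range_eq_top.2 fun y => ⟨y, by simp [g]⟩) (by simpa [g] using Submodule.isCompl_orthogonal K)
  have he : ∀ x, e x = (L x, g x) := fun x => rfl
  obtain ⟨c, hc⟩ : ∃ c : NNReal, (volume : Measure (EuclideanSpace ℝ (Fin n))).map e =
      c • ((volume : Measure (EuclideanSpace ℝ (Fin m))).prod (volume : Measure K)) :=
    ⟨_, Measure.isAddLeftInvariant_eq_smul _ _⟩
  let R := ‖L‖ + 1
  let R' := ‖g‖ + 1
  let G : EuclideanSpace ℝ (Fin m) × K → ENNReal := fun p =>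
    (ball 0 R).indicator (fun y => (ENNReal.ofReal (‖y‖ ^ k))⁻¹) p.1 *
      (ball 0 R').indicator (fun _ => 1) p.2
  have hm1 : Measurable ((ball 0 R).indicator
      (fun y : EuclideanSpace ℝ (Fin m) => (ENNReal.ofReal (‖y‖ ^ k))⁻¹)) :=
    Measurable.indicator (by fun_prop) measurableSet_ball
  have hm2 : Measurable ((ball (0 : K) R').indicator (fun _ => (1 : ENNReal))) :=
    Measurable.indicator (by fun_prop) measurableSet_ball
  have hG : Measurable G := by fun_prop
  calc ∫⁻ x in ball (0 : EuclideanSpace ℝ (Fin n)) 1, (ENNReal.ofReal (‖L x‖ ^ k))⁻¹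
      ≤ ∫⁻ x, G (e x) := by
        rw [← lintegral_indicator measurableSet_ball]
        refine lintegral_mono fun x => ?_
        by_cases hx : x ∈ ball (0 : EuclideanSpace ℝ (Fin n)) 1
        · have hx' : ‖x‖ ≤ 1 := by simpa using (mem_ball_zero_iff.1 hx).le
          have h1 : L x ∈ ball (0 : EuclideanSpace ℝ (Fin m)) R := by
            rw [mem_ball_zero_iff]
            have := L.le_opNorm_of_le hx'
            simp only [R]; linarith
          have h2 : g x ∈ ball (0 : K) R' := by
            rw [mem_ball_zero_iff]
            have := g.le_opNorm_of_le hx'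
            simp only [R']; linarith
          simp [G, he, Set.indicator_of_mem, hx, h1, h2, -mem_ball]
        · simp [Set.indicator_of_notMem, hx, -mem_ball]
    _ = ∫⁻ p, G p ∂((volume : Measure (EuclideanSpace ℝ (Fin n))).map e) := by
        rw [lintegral_map hG e.continuous.measurable]
    _ = c * ((∫⁻ y in ball (0 : EuclideanSpace ℝ (Fin m)) R, (ENNReal.ofReal (‖y‖ ^ k))⁻¹) *
          volume (ball (0 : K) R')) := by
        rw [hc, lintegral_smul_measure]
        simp only [G]
        rw [lintegral_prod_mul hm1.aemeasurable hm2.aemeasurable,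
          lintegral_indicator measurableSet_ball, lintegral_indicator measurableSet_ball]
        simp [ENNReal.smul_def]
    _ < ⊤ := ENNReal.mul_lt_top (by simp)
        (ENNReal.mul_lt_top (aux_local m k hk R) measure_ball_lt_top)

lemma aux_sphere (m n k : ℕ) (hk : k < m)
    (L : EuclideanSpace ℝ (Fin n) →L[ℝ] EuclideanSpace ℝ (Fin m))
    (hL : Function.Surjective L) :
    ∫⁻ η : sphere (0 : EuclideanSpace ℝ (Fin n)) 1,
        (ENNReal.ofReal (‖L (η : EuclideanSpace ℝ (Fin n))‖ ^ k))⁻¹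
        ∂(volume : Measure (EuclideanSpace ℝ (Fin n))).toSphere < ⊤ := by
  let E := EuclideanSpace ℝ (Fin n)
  let f : E → ENNReal := fun x => (ENNReal.ofReal (‖L x‖ ^ k))⁻¹
  have hf : Measurable f := by fun_prop
  let I : Set (Set.Ioi (0 : ℝ)) := Set.Iio ⟨1, Set.mem_Ioi.2 one_pos⟩
  let ν := Measure.volumeIoiPow (Module.finrank ℝ E - 1)
  have hν : ν I ≠ 0 := by
    simp only [ν, I]
    rw [Measure.volumeIoiPow_apply_Iio]
    simp only [ne_eq, ENNReal.ofReal_eq_zero, not_le]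
    positivity
  let σ := (volume : Measure E).toSphere
  have key : (∫⁻ η : sphere (0 : E) 1, f η ∂σ) * ν I ≤ ∫⁻ x in ball (0 : E) 1, f x := by
    have mp := (volume : Measure E).measurePreserving_homeomorphUnitSphereProd
    calc (∫⁻ η : sphere (0 : E) 1, f η ∂σ) * ν I
        = ∫⁻ p : sphere (0 : E) 1 × Set.Ioi (0 : ℝ), f p.1 * I.indicator (fun _ => 1) p.2
            ∂(σ.prod ν) := by
          rw [lintegral_prod_mul (f := fun η : sphere (0 : E) 1 => f η)
            (g := I.indicator (fun _ => 1)) (by fun_prop)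
            (Measurable.indicator (by fun_prop) measurableSet_Iio).aemeasurable,
            lintegral_indicator measurableSet_Iio]
          simp [I]
      _ = ∫⁻ x : ({0}ᶜ : Set E), f (homeomorphUnitSphereProd E x).1 *
            I.indicator (fun _ => 1) (homeomorphUnitSphereProd E x).2
            ∂((volume : Measure E).comap (↑)) := by
          exact (mp.lintegral_comp_emb (homeomorphUnitSphereProd E).measurableEmbedding _).symm
      _ ≤ ∫⁻ x : ({0}ᶜ : Set E), (ball (0 : E) 1).indicator f x
            ∂((volume : Measure E).comap (↑)) := by
          refine lintegral_mono fun x => ?_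
          by_cases hx : (homeomorphUnitSphereProd E x).2 ∈ I
          · have hx1 : ‖(x : E)‖ < 1 := by
              have h : ((homeomorphUnitSphereProd E x).2 : ℝ) < 1 := hx
              simpa using h
            have hx2 : (x : E) ∈ ball (0 : E) 1 := by simpa using hx1
            have hx0 : 0 < ‖(x : E)‖ := norm_pos_iff.2 x.2
            rw [Set.indicator_of_mem hx, Set.indicator_of_mem hx2, mul_one]
            simp only [f]
            gcongr
            simp only [homeomorphUnitSphereProd_apply_fst_coe, map_smul, norm_smul, norm_inv,
              norm_norm]
            exact le_mul_of_one_le_left (norm_nonneg _) ((one_le_inv₀ hx0).2 hx1.le)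
          · rw [Set.indicator_of_notMem hx]; simp
      _ = ∫⁻ x in ({0}ᶜ : Set E), (ball (0 : E) 1).indicator f x :=
          lintegral_subtype_comap (measurableSet_singleton _).compl _
      _ ≤ ∫⁻ x, (ball (0 : E) 1).indicator f x := setLIntegral_le_lintegral _ _
      _ = ∫⁻ x in ball (0 : E) 1, f x := lintegral_indicator measurableSet_ball _
  have h := lt_of_le_of_lt key (aux_ball m n k hk L hL)
  exact ENNReal.lt_top_of_mul_ne_top_left h.ne hν

lemma aux_surj (m n : ℕ) (T : Matrix (Fin n) (Fin m) ℝ)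
    (hT : Function.Injective (Matrix.toEuclideanLin T)) :
    Function.Surjective (Matrix.toEuclideanLin Tᵀ) := by
  have h : Matrix.toEuclideanLin Tᵀ = LinearMap.adjoint (Matrix.toEuclideanLin T) := by
    rw [← Matrix.toEuclideanLin_conjTranspose_eq_adjoint, Matrix.conjTranspose_eq_transpose_of_trivial]
  rw [h, ← LinearMap.range_eq_top]
  apply Submodule.eq_top_of_finrank_eq
  rw [LinearMap.finrank_range_adjoint, LinearMap.finrank_range_of_inj hT]

/-- for a full-rank `(n×m)`-matrix `T` with `m < n`, the surface integrals of
`‖Tᵗη‖⁻²` (for `m ≥ 3`) and of `‖Tᵗη‖⁻⁴` (for `m ≥ 5`) over the unit sphere of `ℝⁿ`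
are finite, despite the singular integrands. -/
theorem surface_integral_inverse_norm_finite (m n : ℕ) (hmn : m < n)
    (T : Matrix (Fin n) (Fin m) ℝ)
    (hT : Function.Injective (Matrix.toEuclideanLin T)) :
    (3 ≤ m →
      ∫⁻ η : sphere (0 : EuclideanSpace ℝ (Fin n)) 1,
        (ENNReal.ofReal (‖Matrix.toEuclideanLin Tᵀ (η : EuclideanSpace ℝ (Fin n))‖ ^ 2))⁻¹
        ∂(volume : Measure (EuclideanSpace ℝ (Fin n))).toSphere < ⊤) ∧
    (5 ≤ m →
      ∫⁻ η : sphere (0 : EuclideanSpace ℝ (Fin n)) 1,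
        (ENNReal.ofReal (‖Matrix.toEuclideanLin Tᵀ (η : EuclideanSpace ℝ (Fin n))‖ ^ 4))⁻¹
        ∂(volume : Measure (EuclideanSpace ℝ (Fin n))).toSphere < ⊤) := by
  have hs := aux_surj m n T hT
  exact ⟨fun h => aux_sphere m n 2 (by omega) (Matrix.toEuclideanLin Tᵀ).toContinuousLinearMap hs,
    fun h => aux_sphere m n 4 (by omega) (Matrix.toEuclideanLin Tᵀ).toContinuousLinearMap hs⟩
end

section
/- Let m < n and let P be a real (m×n)-matrix that is an orthogonal projection, i.e. P Pᵗ = I_m. Then for every 0 ≤ δ < 1 the uniform probability measure of the set {x ∈ S^{n−1} : ‖Px‖² ≤ δ} equals F(δ) = (Γ(α+β)/(Γ(α)Γ(β))) ∫_0^δ t^{α−1} (1−t)^{β−1} dt, where α = m/2 and β = (n−m)/2. Moreover F(δ) tends to 1 as δ tends to 1. -/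
open MeasureTheory Metric Matrix
open scoped ENNReal


lemma ii_congr {E : Type*} [NormedAddCommGroup E] [NormedSpace ℝ E] {f g : ℝ → E} {a b : ℝ}
    (h : Set.EqOn f g (Set.uIoc a b)) : ∫ x in a..b, f x = ∫ x in a..b, g x :=
  intervalIntegral.integral_congr_ae (Filter.Eventually.of_forall h)

lemma beta_intble (α β δ : ℝ) (hα : 0 < α) (h0 : 0 ≤ δ) (h1 : δ < 1) :
    IntervalIntegrable (fun t : ℝ => t ^ (α - 1) * (1 - t) ^ (β - 1)) volume 0 δ := by
  apply IntervalIntegrable.mul_continuousOn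
  · exact intervalIntegral.intervalIntegrable_rpow' (by linarith)
  · rw [Set.uIcc_of_le h0]
    apply ContinuousOn.rpow_const (by fun_prop)
    intro x hx
    left
    have := hx.2
    linarith

lemma beta_ibp (α β δ : ℝ) (hα : 0 < α) (hβ : 0 < β) (h0 : 0 ≤ δ) (h1 : δ < 1) :
    (α + β) * ∫ t in (0 : ℝ)..δ, t ^ α * (1 - t) ^ (β - 1) =
      α * (∫ t in (0 : ℝ)..δ, t ^ (α - 1) * (1 - t) ^ (β - 1)) - δ ^ α * (1 - δ) ^ β := by
  have i1 := beta_intble α β δ hα h0 h1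
  have i2 := beta_intble (α + 1) β δ (by linarith) h0 h1
  rw [add_sub_cancel_right] at i2
  have key := intervalIntegral.integral_eq_sub_of_hasDeriv_right_of_le (a := 0) (b := δ)
    (f := fun t : ℝ => t ^ α * (1 - t) ^ β)
    (f' := fun t : ℝ => α * (t ^ (α - 1) * (1 - t) ^ (β - 1)) -
      (α + β) * (t ^ α * (1 - t) ^ (β - 1))) h0 ?_ ?_ ?_
  · rw [intervalIntegral.integral_sub (i1.const_mul _) (i2.const_mul _),
      intervalIntegral.integral_const_mul, intervalIntegral.integral_const_mul,
      Real.zero_rpow hα.ne'] at key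
    linarith
  · apply ContinuousOn.mul
    · apply ContinuousOn.rpow_const (by fun_prop)
      intro x hx; right; exact hα.le
    · apply ContinuousOn.rpow_const (by fun_prop)
      intro x hx; right; exact hβ.le
  · intro x hx
    have hx0 := hx.1
    have hx1 : 0 < 1 - x := by linarith [hx.2]
    have d1 : HasDerivAt (fun t : ℝ => t ^ α) (α * x ^ (α - 1)) x :=
      Real.hasDerivAt_rpow_const (Or.inl hx0.ne')
    have d2 : HasDerivAt (fun t : ℝ => (1 - t) ^ β) (-1 * β * (1 - x) ^ (β - 1)) x :=
      ((hasDerivAt_id x).const_sub 1).rpow_const (Or.inl hx1.ne')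
    have := (d1.mul d2).hasDerivWithinAt (s := Set.Ioi x)
    refine (this.congr_deriv ?_)
    have e1 : x ^ α = x ^ (α - 1) * x := by
      rw [← Real.rpow_add_one hx0.ne']; ring_nf
    have e2 : (1 - x) ^ β = (1 - x) ^ (β - 1) * (1 - x) := by
      rw [← Real.rpow_add_one hx1.ne']; ring_nf
    rw [e1, e2]; ring
  · exact (i1.const_mul _).sub (i2.const_mul _)

lemma sqrt_pow_eq (m : ℕ) (x : ℝ) (hx : 0 ≤ x) : (√x) ^ m = x ^ ((m : ℝ) / 2) := by
  rw [Real.sqrt_eq_rpow, ← Real.rpow_natCast, ← Real.rpow_mul hx]; ring_nf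

lemma one_dim (m : ℕ) (hm : 0 < m) (α β δ : ℝ) (hα : α = m / 2) (hβ : 0 < β) (h0 : 0 ≤ δ)
    (h1 : δ < 1) :
    ∫ s in Set.Ioi (0 : ℝ), s ^ (β - 1) * (√(min (δ / (1 - δ) * s) (1 - s))) ^ m =
      α / (α + β) * ∫ t in (0 : ℝ)..δ, t ^ (α - 1) * (1 - t) ^ (β - 1) := by
  have hα0 : 0 < α := by rw [hα]; positivity
  have hd : 0 < 1 - δ := by linarith
  have hc : 0 ≤ δ / (1 - δ) := by positivity
  set c := δ / (1 - δ) with hcdef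
  have hcd : c * (1 - δ) = δ := by rw [hcdef]; field_simp
  have hsub : ∫ s in Set.Ioi (0 : ℝ), s ^ (β - 1) * (√(min (c * s) (1 - s))) ^ m =
      ∫ s in Set.Ioc (0 : ℝ) 1, s ^ (β - 1) * (√(min (c * s) (1 - s))) ^ m := by
    apply setIntegral_eq_of_subset_of_forall_sdiff_eq_zero measurableSet_Ioi
      (fun x hx => hx.1)
    intro x hx
    have hx1 : 1 < x := by
      by_contra h
      exact hx.2 ⟨hx.1, not_lt.1 h⟩
    rw [Real.sqrt_eq_zero_of_nonpos (le_trans (min_le_right _ _) (by linarith)),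
      zero_pow hm.ne', mul_zero]
  rw [hsub, ← intervalIntegral.integral_of_le zero_le_one]
  -- first piece
  have c1 : Set.EqOn (fun s : ℝ => c ^ α * s ^ (α + β - 1))
      (fun s : ℝ => s ^ (β - 1) * (√(min (c * s) (1 - s))) ^ m) (Set.uIoc 0 (1 - δ)) := by
    rw [Set.uIoc_of_le hd.le]
    intro s hs
    have hs0 := hs.1
    have : c * s ≤ 1 - s := by
      have : c * s ≤ c * (1 - δ) := by gcongr; exact hs.2
      linarith [hs.2]
    simp only
    rw [min_eq_left this, sqrt_pow_eq _ _ (by positivity), ← hα, Real.mul_rpow hc hs0.le,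
      show α + β - 1 = α + (β - 1) by ring, Real.rpow_add hs0]
    ring
  have c2 : Set.EqOn (fun s : ℝ => s ^ (β - 1) * (1 - s) ^ α)
      (fun s : ℝ => s ^ (β - 1) * (√(min (c * s) (1 - s))) ^ m) (Set.uIoc (1 - δ) 1) := by
    rw [Set.uIoc_of_le (by linarith)]
    intro s hs
    have hs0 := hs.1
    have : 1 - s ≤ c * s := by
      have : c * (1 - δ) ≤ c * s := by gcongr
      linarith
    simp only
    rw [min_eq_right this, sqrt_pow_eq _ _ (by linarith [hs.2]), ← hα]
  have i1 : IntervalIntegrable (fun s : ℝ => c ^ α * s ^ (α + β - 1)) volume 0 (1 - δ) :=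
    (intervalIntegral.intervalIntegrable_rpow' (by linarith)).const_mul _
  have i2 : IntervalIntegrable (fun s : ℝ => s ^ (β - 1) * (1 - s) ^ α) volume (1 - δ) 1 := by
    apply ContinuousOn.intervalIntegrable
    rw [Set.uIcc_of_le (by linarith)]
    apply ContinuousOn.mul
    · apply ContinuousOn.rpow_const (by fun_prop)
      intro x hx; left; exact (lt_of_lt_of_le hd hx.1).ne'
    · apply ContinuousOn.rpow_const (by fun_prop)
      intro x hx; right; exact hα0.le
  rw [← intervalIntegral.integral_add_adjacent_intervals (i1.congr c1) (i2.congr c2),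
    ← ii_congr c1, ← ii_congr c2]
  rw [intervalIntegral.integral_const_mul, integral_rpow (Or.inl (by linarith))]
  have hflip := intervalIntegral.integral_comp_sub_left (a := 0) (b := δ)
    (fun s : ℝ => s ^ (β - 1) * (1 - s) ^ α) 1
  rw [sub_zero] at hflip
  rw [← hflip]
  have : ∀ x : ℝ, (1 - x) ^ (β - 1) * (1 - (1 - x)) ^ α = x ^ α * (1 - x) ^ (β - 1) := by
    intro x; rw [sub_sub_cancel, mul_comm]
  simp_rw [this]
  have ibp := beta_ibp α β δ hα0 hβ h0 h1
  have e : c ^ α * (1 - δ) ^ (α + β) = δ ^ α * (1 - δ) ^ β := by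
    rw [Real.rpow_add hd, ← mul_assoc, ← Real.mul_rpow hc hd.le, hcd]
  rw [sub_add_cancel, Real.zero_rpow (by linarith), sub_zero, ← mul_div_assoc, e]
  field_simp
  linarith

lemma beta_tendsto (α β : ℝ) (hα : 0 < α) (hβ : 0 < β) :
    Filter.Tendsto (fun δ => Real.Gamma (α + β) / (Real.Gamma α * Real.Gamma β) *
      ∫ t in (0 : ℝ)..δ, t ^ (α - 1) * (1 - t) ^ (β - 1)) (nhdsWithin 1 (Set.Iio 1)) (nhds 1) := by
  have hconv := Complex.betaIntegral_convergent (u := α) (v := β) (by simpa) (by simpa)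
  have hcongr : Set.EqOn (fun x : ℝ => (x : ℂ) ^ ((α : ℂ) - 1) * (1 - (x : ℂ)) ^ ((β : ℂ) - 1))
      (fun t : ℝ => ((t ^ (α - 1) * (1 - t) ^ (β - 1) : ℝ) : ℂ)) (Set.uIoc 0 1) := by
    rw [Set.uIoc_of_le zero_le_one]
    intro x hx
    simp only
    rw [Complex.ofReal_mul, Complex.ofReal_cpow hx.1.le, Complex.ofReal_cpow (by linarith [hx.2])]
    push_cast; rfl
  have hintble : IntervalIntegrable (fun t : ℝ => t ^ (α - 1) * (1 - t) ^ (β - 1)) volume 0 1 := by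
    have := hconv.congr hcongr
    rw [intervalIntegrable_iff] at this ⊢
    simpa [IntegrableOn] using this.re
  have hval : ∫ t in (0 : ℝ)..1, t ^ (α - 1) * (1 - t) ^ (β - 1) =
      Real.Gamma α * Real.Gamma β / Real.Gamma (α + β) := by
    have h := ProbabilityTheory.beta_eq_betaIntegralReal α β hα hβ
    rw [Complex.betaIntegral, ii_congr hcongr,
      intervalIntegral.integral_ofReal, Complex.ofReal_re] at h
    rw [← h]; rfl
  have hcont := intervalIntegral.continuousOn_primitive_interval' hintble Set.left_mem_uIcc
  have h1 := hcont 1 Set.right_mem_uIcc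
  rw [Set.uIcc_of_le zero_le_one] at h1
  have h2 : Filter.Tendsto (fun b : ℝ => ∫ t in (0 : ℝ)..b, t ^ (α - 1) * (1 - t) ^ (β - 1))
      (nhdsWithin 1 (Set.Iio 1)) (nhds (∫ t in (0 : ℝ)..1, t ^ (α - 1) * (1 - t) ^ (β - 1))) :=
    h1.tendsto.mono_left (nhdsWithin_le_of_mem (by
      filter_upwards [Ioo_mem_nhdsLT (zero_lt_one (α := ℝ))] with x hx
      exact ⟨hx.1.le, hx.2.le⟩))
  have h3 := h2.const_mul (Real.Gamma (α + β) / (Real.Gamma α * Real.Gamma β))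
  rw [hval] at h3
  convert h3 using 2
  have := (Real.Gamma_pos_of_pos hα).ne'
  have := (Real.Gamma_pos_of_pos hβ).ne'
  have := (Real.Gamma_pos_of_pos (add_pos hα hβ)).ne'
  field_simp

lemma slice_vol (m : ℕ) (hm : 0 < m) (a b : ℝ) (ha : 0 ≤ a) (hb : 0 ≤ b) :
    volume (closedBall (0 : EuclideanSpace ℝ (Fin m)) a ∩ ball 0 b) =
      ENNReal.ofReal (min a b ^ m) * volume (ball (0 : EuclideanSpace ℝ (Fin m)) 1) := by
  have : Nonempty (Fin m) := ⟨⟨0, hm⟩⟩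
  rcases lt_or_ge a b with h | h
  · rw [Set.inter_eq_left.2 (closedBall_subset_ball h), min_eq_left h.le,
      Measure.addHaar_closedBall _ _ ha]
    simp
  · rw [Set.inter_eq_right.2 ((ball_subset_ball h).trans ball_subset_closedBall), min_eq_right h,
      Measure.addHaar_ball _ _ hb]
    simp

/-- The truncated cone in product coordinates. -/
def coneSet (m k : ℕ) (δ : ℝ) : Set (EuclideanSpace ℝ (Fin m) × EuclideanSpace ℝ (Fin k)) :=
  {p | ‖p.1‖ ^ 2 ≤ δ * (‖p.1‖ ^ 2 + ‖p.2‖ ^ 2) ∧ ‖p.1‖ ^ 2 + ‖p.2‖ ^ 2 < 1}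

lemma coneSet_meas (m k : ℕ) (δ : ℝ) : MeasurableSet (coneSet m k δ) := by
  have h1 : MeasurableSet {p : EuclideanSpace ℝ (Fin m) × EuclideanSpace ℝ (Fin k) |
      ‖p.1‖ ^ 2 ≤ δ * (‖p.1‖ ^ 2 + ‖p.2‖ ^ 2)} := measurableSet_le (by fun_prop) (by fun_prop)
  have h2 : MeasurableSet {p : EuclideanSpace ℝ (Fin m) × EuclideanSpace ℝ (Fin k) |
      ‖p.1‖ ^ 2 + ‖p.2‖ ^ 2 < 1} := measurableSet_lt (by fun_prop) (by fun_prop)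
  exact h1.inter h2

lemma coneSet_slice (m k : ℕ) (δ : ℝ) (h0 : 0 ≤ δ) (h1 : δ < 1) (v : EuclideanSpace ℝ (Fin k)) :
    (fun u => (u, v)) ⁻¹' coneSet m k δ =
      closedBall 0 √(δ / (1 - δ) * ‖v‖ ^ 2) ∩ ball 0 √(1 - ‖v‖ ^ 2) := by
  have hd : 0 < 1 - δ := by linarith
  ext u
  simp only [coneSet, Set.mem_preimage, Set.mem_ofPred_eq, Set.mem_inter_iff, mem_closedBall,
    mem_ball, dist_zero_right]
  rw [Real.le_sqrt (norm_nonneg _) (by positivity), Real.lt_sqrt (norm_nonneg _), div_mul_eq_mul_div,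
    le_div_iff₀ hd]
  constructor <;> rintro ⟨h, h'⟩ <;> constructor <;> linarith

lemma coneSet_vol (m k : ℕ) (hm : 0 < m) (hk : 0 < k) (δ : ℝ) (h0 : 0 ≤ δ) (h1 : δ < 1) :
    (volume (coneSet m k δ)).toReal = (volume (ball (0 : EuclideanSpace ℝ (Fin m)) 1)).toReal *
      (volume (ball (0 : EuclideanSpace ℝ (Fin k)) 1)).toReal * ((k : ℝ) / 2) *
      ∫ s in Set.Ioi (0 : ℝ),
        s ^ ((k : ℝ) / 2 - 1) * (√(min (δ / (1 - δ) * s) (1 - s))) ^ m := by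
  have : Nonempty (Fin k) := ⟨⟨0, hk⟩⟩
  set h : ℝ → ℝ := fun y => (√(min (δ / (1 - δ) * y ^ 2) (1 - y ^ 2))) ^ m with hh
  have hsl : ∀ v : EuclideanSpace ℝ (Fin k),
      volume ((fun u => (u, v)) ⁻¹' coneSet m k δ) =
        ENNReal.ofReal (h ‖v‖) * volume (ball (0 : EuclideanSpace ℝ (Fin m)) 1) := by
    intro v
    rw [coneSet_slice m k δ h0 h1 v, slice_vol m hm _ _ (Real.sqrt_nonneg _) (Real.sqrt_nonneg _),
      hh]
    simp only
    rw [Real.sqrt_monotone.map_min]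
  have hmeas : Measurable h := by rw [hh]; fun_prop
  have hnn : ∀ y, 0 ≤ h y := fun y => by positivity
  rw [Measure.volume_eq_prod, Measure.prod_apply_symm (coneSet_meas m k δ)]
  simp_rw [hsl]
  rw [lintegral_mul_const _ (by fun_prop), ENNReal.toReal_mul,
    ← integral_eq_lintegral_of_nonneg_ae (Filter.Eventually.of_forall fun v => hnn _)
      (by fun_prop), integral_fun_norm_addHaar volume h]
  have hsubst := integral_comp_rpow_Ioi_of_pos (p := 2) (g := fun s : ℝ =>
    s ^ ((k : ℝ) / 2 - 1) * (√(min (δ / (1 - δ) * s) (1 - s))) ^ m) two_pos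
  rw [← hsubst]
  have hcg : ∫ x in Set.Ioi (0 : ℝ), ((2 : ℝ) * x ^ ((2 : ℝ) - 1)) • ((x ^ (2 : ℝ)) ^ ((k : ℝ) / 2 - 1) *
      (√(min (δ / (1 - δ) * x ^ (2 : ℝ)) (1 - x ^ (2 : ℝ)))) ^ m) =
      ∫ x in Set.Ioi (0 : ℝ), 2 * (x ^ (k - 1) * h x) := by
    apply setIntegral_congr_fun measurableSet_Ioi
    intro x hx
    have hx0 : (0 : ℝ) < x := hx
    simp only [smul_eq_mul, hh]
    have e : x ^ (k - 1) = x ^ ((2 : ℝ) - 1) * (x ^ (2 : ℝ)) ^ ((k : ℝ) / 2 - 1) := by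
      rw [← Real.rpow_mul hx0.le, ← Real.rpow_add hx0, ← Real.rpow_natCast, Nat.cast_sub hk]
      congr 1; push_cast; ring
    rw [e, Real.rpow_two]; ring
  rw [hcg, integral_const_mul]
  simp only [finrank_euclideanSpace, Fintype.card_fin, nsmul_eq_mul, smul_eq_mul, Measure.real]
  ring

lemma exists_coord (m k n : ℕ) (hn : n = m + k) (P : Matrix (Fin m) (Fin n) ℝ)
    (hP : P * Pᵀ = 1) :
    ∃ f : EuclideanSpace ℝ (Fin n) → EuclideanSpace ℝ (Fin m) × EuclideanSpace ℝ (Fin k),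
      MeasurePreserving f volume volume ∧ (∀ x, ‖(f x).1‖ = ‖Matrix.toEuclideanLin P x‖) ∧
      ∀ x, ‖(f x).1‖ ^ 2 + ‖(f x).2‖ ^ 2 = ‖x‖ ^ 2 := by
  classical
  let v : Fin m ⊕ Fin k → EuclideanSpace ℝ (Fin n) := Sum.elim (fun i => WithLp.toLp 2 (P i)) 0
  have hv : Orthonormal ℝ ((Set.range (Sum.inl : Fin m → Fin m ⊕ Fin k)).domRestrict v) := by
    rw [orthonormal_iff_ite]
    rintro ⟨_, i, rfl⟩ ⟨_, j, rfl⟩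
    have := congrFun (congrFun hP i) j
    simp only [Matrix.mul_apply, Matrix.transpose_apply, Matrix.one_apply] at this
    have hite : (if (⟨Sum.inl i, i, rfl⟩ : Set.range (Sum.inl : Fin m → Fin m ⊕ Fin k)) =
        ⟨Sum.inl j, j, rfl⟩ then (1 : ℝ) else 0) = if i = j then 1 else 0 := by
      by_cases h : i = j
      · subst h; rw [if_pos rfl, if_pos rfl]
      · rw [if_neg h, if_neg fun h' => h (Sum.inl.inj (congrArg Subtype.val h'))]
    refine Eq.trans ?_ (this.trans hite.symm)
    change inner ℝ (WithLp.toLp 2 (P i) : EuclideanSpace ℝ (Fin n)) (WithLp.toLp 2 (P j)) = _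
    rw [PiLp.inner_apply]
    exact Finset.sum_congr rfl fun _ _ => mul_comm _ _
  obtain ⟨b, hb⟩ := Orthonormal.exists_orthonormalBasis_extension_of_card_eq
    (by simp [hn]) hv
  have hbi : ∀ i, b (Sum.inl i) = WithLp.toLp 2 (P i) := fun i => by
    rw [hb _ ⟨i, rfl⟩]; rfl
  refine ⟨fun x => (WithLp.toLp 2 fun i => b.repr x (Sum.inl i),
    WithLp.toLp 2 fun i => b.repr x (Sum.inr i)), ?_, ?_, ?_⟩
  · have h1 := b.measurePreserving_repr
    have h2 := (PiLp.volume_preserving_ofLp (Fin m ⊕ Fin k)).comp h1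
    have h3 := (volume_measurePreserving_sumPiEquivProdPi (fun _ : Fin m ⊕ Fin k => ℝ)).comp h2
    have h4 := ((PiLp.volume_preserving_toLp (Fin m)).prod
      (PiLp.volume_preserving_toLp (Fin k))).comp h3
    exact h4
  · intro x
    congr 1
    ext i
    simp [b.repr_apply_apply, hbi, PiLp.inner_apply, Matrix.mulVec, dotProduct, mul_comm]
  · intro x
    rw [← b.repr.norm_map x, EuclideanSpace.norm_sq_eq (b.repr x), Fintype.sum_sum_type,
      EuclideanSpace.norm_sq_eq, EuclideanSpace.norm_sq_eq]


open scoped Pointwise in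
lemma sphere_cone (m k n : ℕ) (P : Matrix (Fin m) (Fin n) ℝ) (δ : ℝ)
    (f : EuclideanSpace ℝ (Fin n) → EuclideanSpace ℝ (Fin m) × EuclideanSpace ℝ (Fin k))
    (hf1 : ∀ x, ‖(f x).1‖ = ‖Matrix.toEuclideanLin P x‖)
    (hf2 : ∀ x, ‖(f x).1‖ ^ 2 + ‖(f x).2‖ ^ 2 = ‖x‖ ^ 2) :
    Set.Ioo (0 : ℝ) 1 • (Subtype.val '' {x : sphere (0 : EuclideanSpace ℝ (Fin n)) 1 |
          ‖Matrix.toEuclideanLin P (x : EuclideanSpace ℝ (Fin n))‖ ^ 2 ≤ δ}) =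
      f ⁻¹' coneSet m k δ \ {0} := by
  have hf3 : ∀ x, ‖Matrix.toEuclideanLin P x‖ ^ 2 + ‖(f x).2‖ ^ 2 = ‖x‖ ^ 2 :=
    fun x => by rw [← hf1, hf2]
  ext y
  simp only [Set.mem_smul, Set.mem_image, Set.mem_ofPred_eq, coneSet, Set.mem_sdiff,
    Set.mem_preimage, Set.mem_singleton_iff, hf1, hf3]
  constructor
  · rintro ⟨r, ⟨hr0, hr1⟩, _, ⟨x, hx, rfl⟩, rfl⟩
    have hx1 : ‖(x : EuclideanSpace ℝ (Fin n))‖ = 1 := by simp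
    rw [map_smul, norm_smul, norm_smul, hx1, mul_one, mul_pow, Real.norm_of_nonneg hr0.le]
    refine ⟨⟨?_, ?_⟩, ?_⟩
    · rw [mul_comm δ]; gcongr
    · nlinarith
    · intro h
      rw [← norm_eq_zero, norm_smul, hx1, mul_one, Real.norm_of_nonneg hr0.le] at h
      linarith
  · rintro ⟨⟨h1, h2⟩, h3⟩
    have hy : 0 < ‖y‖ := norm_pos_iff.2 h3
    refine ⟨‖y‖, ⟨hy, by nlinarith⟩, ‖y‖⁻¹ • y, ⟨⟨‖y‖⁻¹ • y, ?_⟩, ?_, rfl⟩, ?_⟩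
    · simp [norm_smul, hy.ne']
    · simp only
      rw [map_smul, norm_smul, norm_inv, norm_norm, mul_pow, inv_pow, inv_mul_le_iff₀ (by positivity),
        mul_comm]
      exact h1
    · rw [smul_smul, mul_inv_cancel₀ hy.ne', one_smul]

lemma ball_vol (d : ℕ) (hd : 0 < d) :
    (volume (ball (0 : EuclideanSpace ℝ (Fin d)) 1)).toReal =
      √Real.pi ^ d / Real.Gamma ((d : ℝ) / 2 + 1) := by
  have : Nonempty (Fin d) := ⟨⟨0, hd⟩⟩
  have : 0 < Real.Gamma ((d : ℝ) / 2 + 1) := Real.Gamma_pos_of_pos (by positivity)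
  rw [EuclideanSpace.volume_ball]
  simp
  positivity

/-- for an orthogonal projection `P` from `ℝⁿ` onto `ℝᵐ`, the uniform
probability measure of `{x ∈ S^{n−1} : ‖Px‖² ≤ δ}` equals the beta distribution function
`F(δ)` with parameters `α = m/2`, `β = (n−m)/2`, and `F(δ) → 1` as `δ → 1`. -/
theorem projection_beta_distribution (m n : ℕ) (hm : 0 < m) (hmn : m < n)
    (P : Matrix (Fin m) (Fin n) ℝ) (hP : P * Pᵀ = 1)
    (α β : ℝ) (hα : α = m / 2) (hβ : β = ((n : ℝ) - m) / 2)
    (F : ℝ → ℝ)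
    (hF : ∀ δ : ℝ, F δ = Real.Gamma (α + β) / (Real.Gamma α * Real.Gamma β) *
      ∫ t in (0 : ℝ)..δ, t ^ (α - 1) * (1 - t) ^ (β - 1)) :
    (∀ δ : ℝ, 0 ≤ δ → δ < 1 →
      ((((n : ℝ≥0∞) * volume (ball (0 : EuclideanSpace ℝ (Fin n)) 1))⁻¹ •
          (volume : Measure (EuclideanSpace ℝ (Fin n))).toSphere)
        {x : sphere (0 : EuclideanSpace ℝ (Fin n)) 1 |
          ‖Matrix.toEuclideanLin P (x : EuclideanSpace ℝ (Fin n))‖ ^ 2 ≤ δ}).toReal = F δ) ∧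
    Filter.Tendsto F (nhdsWithin 1 (Set.Iio 1)) (nhds 1) := by
  obtain ⟨k, rfl⟩ : ∃ k, n = m + k := ⟨n - m, by omega⟩
  have hk : 0 < k := by omega
  have hβ' : β = (k : ℝ) / 2 := by rw [hβ]; push_cast; ring
  have hα0 : 0 < α := by rw [hα]; positivity
  have hβ0 : 0 < β := by rw [hβ']; positivity
  have hFe : F = _ := funext hF
  refine ⟨?_, by rw [hFe]; exact beta_tendsto α β hα0 hβ0⟩
  intro δ h0 h1
  obtain ⟨f, hf, hf1, hf2⟩ := exists_coord m k (m + k) rfl P hP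
  have : Nonempty (Fin (m + k)) := ⟨⟨0, by omega⟩⟩
  have hms : MeasurableSet {x : sphere (0 : EuclideanSpace ℝ (Fin (m + k))) 1 |
      ‖Matrix.toEuclideanLin P (x : EuclideanSpace ℝ (Fin (m + k)))‖ ^ 2 ≤ δ} := by
    apply measurableSet_le _ measurable_const
    have hc : Continuous (Matrix.toEuclideanLin P) := LinearMap.continuous_of_finiteDimensional _
    exact ((hc.comp continuous_subtype_val).norm.pow 2).measurable
  rw [Measure.smul_apply, Measure.toSphere_apply' _ hms, sphere_cone m k (m + k) P δ f hf1 hf2,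
    measure_sdiff_null (measure_singleton _), hf.measure_preimage
      (coneSet_meas m k δ).nullMeasurableSet, smul_eq_mul, ENNReal.toReal_mul, ENNReal.toReal_inv,
    ENNReal.toReal_mul, ENNReal.toReal_mul, coneSet_vol m k hm hk δ h0 h1, ball_vol m hm,
    ball_vol k hk, ball_vol (m + k) (by omega), ← hβ', one_dim m hm α β δ hα hβ0 h0 h1, hF]
  have hs : (((m + k : ℕ) : ℝ)) / 2 = α + β := by rw [hα, hβ']; push_cast; ring
  rw [hs, ← hα, Real.Gamma_add_one hα0.ne', Real.Gamma_add_one hβ0.ne',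
    Real.Gamma_add_one (add_pos hα0 hβ0).ne', pow_add]
  have g1 := (Real.Gamma_pos_of_pos hα0).ne'
  have g2 := (Real.Gamma_pos_of_pos hβ0).ne'
  have g3 := (Real.Gamma_pos_of_pos (add_pos hα0 hβ0)).ne'
  have g4 : α + β ≠ 0 := (add_pos hα0 hβ0).ne'
  have g5 : √Real.pi ≠ 0 := (Real.sqrt_pos.2 Real.pi_pos).ne'
  have g6 : ((m + k : ℕ) : ℝ) ≠ 0 := by positivity
  simp only [finrank_euclideanSpace, Fintype.card_fin, ENNReal.toReal_natCast]
  field_simp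
end

section
/- For parameters α, β > 1 let B(α,β;x) = (Γ(α+β)/(Γ(α)Γ(β))) ∫_0^{min(max(x,0),1)} t^{α−1}(1−t)^{β−1} dt be the cumulative distribution function of the beta distribution (extended by 0 for x < 0 and 1 for x > 1), let E = α/(α+β), V = αβ/((α+β)²(α+β+1)), and σ = √V, and let B̃(α,β;x) = B(α,β; σx + E) be the rescaled distribution function. Then for every fixed x ∈ ℝ, B̃(α,β;x) tends to Φ(x) = (1/√(2π)) ∫_{−∞}^x e^{−t²/2} dt, the distribution function of the standard normal distribution, as α and β both go to infinity. -/
open MeasureTheory Filter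

/-- The cumulative distribution function of the beta distribution with parameters `a`, `b`,
extended by `0` for `x < 0` and by `1` for `x > 1`. -/
noncomputable def betaCDF (a b x : ℝ) : ℝ :=
  Real.Gamma (a + b) / (Real.Gamma a * Real.Gamma b) *
    ∫ t in (0 : ℝ)..(min (max x 0) 1), t ^ (a - 1) * (1 - t) ^ (b - 1)

/-- The beta distribution function rescaled to expected value `0` and variance `1`. -/
noncomputable def betaCDFrescaled (a b x : ℝ) : ℝ :=
  betaCDF a b (Real.sqrt (a * b / ((a + b) ^ 2 * (a + b + 1))) * x + a / (a + b))

open ProbabilityTheory in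
lemma betaCDF_eq {a b : ℝ} (ha : 1 < a) (hb : 1 < b) (y : ℝ) :
    betaCDF a b y = ∫ t in Set.Iic y, betaPDFReal a b t := by
  have hm : (0 : ℝ) ≤ min (max y 0) 1 := by positivity
  have hset : Set.Ioc (0 : ℝ) (min (max y 0) 1) = Set.Iic y ∩ Set.Ioc 0 1 := by
    ext t
    simp only [Set.mem_Ioc, Set.mem_inter_iff, Set.mem_Iic, le_min_iff, le_max_iff]
    constructor
    · rintro ⟨h0, h1 | h1, h2⟩
      · exact ⟨h1, h0, h2⟩
      · linarith
    · rintro ⟨h1, h0, h2⟩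
      exact ⟨h0, Or.inl h1, h2⟩
  have hF : ∀ t, betaPDFReal a b t = (Set.Ioc (0 : ℝ) 1).indicator
      (fun t => Real.Gamma (a + b) / (Real.Gamma a * Real.Gamma b) *
        (t ^ (a - 1) * (1 - t) ^ (b - 1))) t := by
    intro t
    rw [betaPDFReal, Set.indicator_apply]
    by_cases h : 0 < t ∧ t < 1
    · rw [if_pos h, if_pos ⟨h.1, h.2.le⟩, beta, one_div_div]
      ring
    · rw [if_neg h]
      by_cases h' : t ∈ Set.Ioc (0 : ℝ) 1
      · have : t = 1 := le_antisymm h'.2 (not_lt.1 fun h2 => h ⟨h'.1, h2⟩)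
        rw [if_pos h', this, sub_self, Real.zero_rpow (by linarith)]
        simp
      · rw [if_neg h']
  simp_rw [hF]
  rw [setIntegral_indicator measurableSet_Ioc, ← hset, integral_const_mul, betaCDF,
    intervalIntegral.integral_of_le hm]

open ProbabilityTheory in
lemma integral_betaPDFReal_one {a b : ℝ} (ha : 1 < a) (hb : 1 < b) :
    ∫ t, betaPDFReal a b t = 1 := by
  have hnn : ∀ t, 0 ≤ betaPDFReal a b t := by
    intro t
    by_cases h : 0 < t ∧ t < 1
    · exact (betaPDFReal_pos h.1 h.2 (by linarith) (by linarith)).le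
    · rw [betaPDFReal, if_neg h]
  rw [integral_eq_lintegral_of_nonneg_ae (Eventually.of_forall hnn)
    (stronglyMeasurable_betaPDFReal a b).aestronglyMeasurable]
  have := lintegral_betaPDF_eq_one (α := a) (β := b) (by linarith) (by linarith)
  simp only [betaPDF] at this
  rw [this]; simp

/-- Relative scale. -/
noncomputable def scl (a b : ℝ) : ℝ := Real.sqrt (b / (a * (a + b + 1)))

/-- Rescaled beta density normalised to have value one at zero. -/
noncomputable def gDen (a b s : ℝ) : ℝ :=
  if 0 < 1 + scl a b * s ∧ 0 < 1 + -(scl b a * s) then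
    (1 + scl a b * s) ^ (a - 1) * (1 + -(scl b a * s)) ^ (b - 1) else 0

lemma sigma_eq {a b : ℝ} (ha : 0 < a) (hb : 0 < b) :
    Real.sqrt (a * b / ((a + b) ^ 2 * (a + b + 1))) = a / (a + b) * scl a b := by
  rw [scl, ← Real.sqrt_sq (show 0 ≤ a / (a + b) by positivity), ← Real.sqrt_mul (by positivity)]
  congr 1
  field_simp

lemma gDen_eq {a b : ℝ} (ha : 1 < a) (hb : 1 < b) (s : ℝ) :
    ProbabilityTheory.betaPDFReal a b
      (Real.sqrt (a * b / ((a + b) ^ 2 * (a + b + 1))) * s + a / (a + b)) =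
    (1 / ProbabilityTheory.beta a b * (a / (a + b)) ^ (a - 1) * (b / (a + b)) ^ (b - 1)) *
      gDen a b s := by
  have ha0 : 0 < a := by linarith
  have hb0 : 0 < b := by linarith
  have h1 : Real.sqrt (a * b / ((a + b) ^ 2 * (a + b + 1))) * s + a / (a + b) =
      a / (a + b) * (1 + scl a b * s) := by
    rw [sigma_eq ha0 hb0]; ring
  have h2 : 1 - (Real.sqrt (a * b / ((a + b) ^ 2 * (a + b + 1))) * s + a / (a + b)) =
      b / (a + b) * (1 + -(scl b a * s)) := by
    have := sigma_eq hb0 ha0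
    rw [mul_comm b a, add_comm b a] at this
    rw [this]
    field_simp
    ring
  have hA : 0 < a / (a + b) := by positivity
  have hB : 0 < b / (a + b) := by positivity
  rw [ProbabilityTheory.betaPDFReal, gDen]
  have hiff : (0 < Real.sqrt (a * b / ((a + b) ^ 2 * (a + b + 1))) * s + a / (a + b) ∧
      Real.sqrt (a * b / ((a + b) ^ 2 * (a + b + 1))) * s + a / (a + b) < 1) ↔
      (0 < 1 + scl a b * s ∧ 0 < 1 + -(scl b a * s)) := by
    rw [← sub_pos (b := Real.sqrt _ * s + _), h2, h1, mul_pos_iff_of_pos_left hA,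
      mul_pos_iff_of_pos_left hB]
  simp only [hiff]
  split_ifs with h
  · rw [h2, h1, Real.mul_rpow hA.le h.1.le, Real.mul_rpow hB.le h.2.le]
    ring
  · simp

lemma rescaled_eq {a b : ℝ} (ha : 1 < a) (hb : 1 < b) (x : ℝ) :
    betaCDFrescaled a b x = (∫ s in Set.Iic x, gDen a b s) / ∫ s, gDen a b s := by
  have ha0 : 0 < a := by linarith
  have hb0 : 0 < b := by linarith
  set σ := Real.sqrt (a * b / ((a + b) ^ 2 * (a + b + 1))) with hσd
  set m := a / (a + b) with hm
  set K := 1 / ProbabilityTheory.beta a b * m ^ (a - 1) * (b / (a + b)) ^ (b - 1) with hK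
  have hσ : 0 < σ := Real.sqrt_pos.2 (by positivity)
  have key : ∀ f : ℝ → ℝ, ∫ s, f (σ * s + m) = σ⁻¹ * ∫ t, f t := by
    intro f
    rw [Measure.integral_comp_mul_left (fun t => f (t + m)) σ, integral_add_right_eq_self,
      abs_of_pos (by positivity), smul_eq_mul]
  have e : ∀ s, ProbabilityTheory.betaPDFReal a b (σ * s + m) = K * gDen a b s := gDen_eq ha hb
  have h1 := key (ProbabilityTheory.betaPDFReal a b)
  rw [integral_betaPDFReal_one ha hb] at h1
  simp_rw [e] at h1
  rw [integral_const_mul] at h1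
  have h2 := key ((Set.Iic (σ * x + m)).indicator (ProbabilityTheory.betaPDFReal a b))
  rw [integral_indicator measurableSet_Iic, ← betaCDF_eq ha hb] at h2
  have e2 : ∀ s, (Set.Iic (σ * x + m)).indicator (ProbabilityTheory.betaPDFReal a b) (σ * s + m)
      = (Set.Iic x).indicator (fun s => K * gDen a b s) s := by
    intro s
    rw [Set.indicator_apply, Set.indicator_apply, e]
    simp [hσ]
  simp_rw [e2] at h2
  rw [integral_indicator measurableSet_Iic, integral_const_mul] at h2
  change betaCDF a b (σ * x + m) = _
  have hne : K * ∫ s, gDen a b s ≠ 0 := by rw [h1]; positivity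
  have hK0 : K ≠ 0 := left_ne_zero_of_mul hne
  have hI0 := right_ne_zero_of_mul hne
  rw [eq_div_iff hI0]
  have : σ * (K * ∫ s, gDen a b s) = 1 := by rw [h1]; field_simp
  have h3 : betaCDF a b (σ * x + m) = σ * (K * ∫ s in Set.Iic x, gDen a b s) := by
    rw [h2]; field_simp
  apply mul_left_cancel₀ (mul_ne_zero hσ.ne' hK0)
  rw [h3]
  linear_combination (σ * K * ∫ s in Set.Iic x, gDen a b s) * this

lemma log_bound {y : ℝ} (hy : 0 < 1 + y) :
    Real.log (1 + y) ≤ y - y ^ 2 / (4 * (1 + |y|)) := by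
  obtain ⟨w, hw, hwy⟩ : ∃ w : ℝ, 0 < w ∧ w ^ 2 = 1 + y :=
    ⟨Real.sqrt (1 + y), Real.sqrt_pos.2 hy, Real.sq_sqrt hy.le⟩
  have h1 : Real.log (1 + y) ≤ 2 * (w - 1) := by
    rw [← hwy, Real.log_pow]
    have := Real.log_le_sub_one_of_pos hw
    push_cast; linarith
  have h2 : y ^ 2 / (4 * (1 + |y|)) ≤ (w - 1) ^ 2 := by
    rw [div_le_iff₀ (by positivity)]
    have hy' : y = (w - 1) * (w + 1) := by linarith [sq (w - 1), hwy, show (w-1)*(w+1) = w^2-1 by ring]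
    have h3 : (w + 1) ^ 2 ≤ 4 * (1 + |y|) := by
      nlinarith [sq_nonneg (w - 1), le_abs_self y, abs_nonneg y]
    calc y ^ 2 = (w - 1) ^ 2 * (w + 1) ^ 2 := by rw [← mul_pow, ← hy']
      _ ≤ _ := by gcongr
  nlinarith

lemma log_approx {y : ℝ} (hy : |y| ≤ 1 / 2) :
    |Real.log (1 + y) - (y - y ^ 2 / 2)| ≤ 2 * |y| ^ 3 := by
  have h := Real.abs_log_sub_add_sum_range_le (x := -y) (by rw [abs_neg]; linarith) 2
  simp only [Finset.sum_range_succ, Finset.sum_range_zero, abs_neg] at h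
  norm_num at h
  rw [show Real.log (1 + y) - (y - y ^ 2 / 2) = -y + y ^ 2 / 2 + Real.log (1 + y) by ring]
  refine h.trans ?_
  rw [div_le_iff₀ (by linarith)]
  have : 0 ≤ |y| ^ 3 := by positivity
  nlinarith

lemma integrable_major : Integrable (fun s : ℝ => Real.exp (1 / 8 - |s| / 16)) := by
  rw [← integrableOn_univ, ← Set.Iic_union_Ioi (a := (0 : ℝ)), integrableOn_union]
  constructor
  · have h := (integrableOn_exp_mul_Iic (a := 1 / 16) (by norm_num) 0).const_mul (Real.exp (1 / 8))
    refine IntegrableOn.congr_fun h (fun s hs => ?_) measurableSet_Iic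
    rw [← Real.exp_add, abs_of_nonpos hs]; congr 1; ring
  · have h := (integrableOn_exp_mul_Ioi (a := -1 / 16) (by norm_num) 0).const_mul (Real.exp (1 / 8))
    refine IntegrableOn.congr_fun h (fun s hs => ?_) measurableSet_Ioi
    rw [← Real.exp_add, abs_of_pos hs]; congr 1; ring

lemma scl_sq {a b : ℝ} (ha : 0 < a) (hb : 0 < b) : a * scl a b ^ 2 = b / (a + b + 1) := by
  rw [scl, Real.sq_sqrt (by positivity)]; field_simp

lemma scl_lin {a b : ℝ} (ha : 0 < a) (hb : 0 < b) : a * scl a b = b * scl b a := by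
  have h1 := sigma_eq ha hb
  have h2 := sigma_eq hb ha
  rw [mul_comm b a, add_comm b a, h1] at h2
  field_simp at h2
  exact h2

lemma scl_tendsto : Tendsto (fun p : ℝ × ℝ => scl p.1 p.2) (atTop ×ˢ atTop) (nhds 0) := by
  have h : Tendsto (fun p : ℝ × ℝ => Real.sqrt (p.1⁻¹)) (atTop ×ˢ atTop) (nhds 0) := by
    have := (Real.continuous_sqrt.tendsto 0).comp
      (tendsto_inv_atTop_zero.comp (tendsto_fst (f := (atTop : Filter ℝ)) (g := (atTop : Filter ℝ))))
    rw [Real.sqrt_zero] at this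
    exact this
  refine squeeze_zero' (Eventually.of_forall fun p => Real.sqrt_nonneg _) ?_ h
  filter_upwards [tendsto_fst.eventually (eventually_gt_atTop 1),
    tendsto_snd.eventually (eventually_gt_atTop 1)] with p ha hb
  apply Real.sqrt_le_sqrt
  have : 0 < p.1 := by linarith
  have : 0 < p.2 := by linarith
  rw [div_le_iff₀ (by positivity)]
  field_simp
  linarith

lemma scl_tendsto' : Tendsto (fun p : ℝ × ℝ => scl p.2 p.1) (atTop ×ˢ atTop) (nhds 0) :=
  scl_tendsto.comp (tendsto_snd.prodMk tendsto_fst)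

lemma quad_tendsto : Tendsto (fun p : ℝ × ℝ =>
    (p.1 - 1) * scl p.1 p.2 ^ 2 + (p.2 - 1) * scl p.2 p.1 ^ 2) (atTop ×ˢ atTop) (nhds 1) := by
  have hn : Tendsto (fun p : ℝ × ℝ => (p.1 + p.2 + 1)⁻¹) (atTop ×ˢ atTop) (nhds 0) := by
    apply tendsto_inv_atTop_zero.comp
    exact tendsto_atTop_add_const_right _ _ (tendsto_fst.atTop_add_atTop tendsto_snd)
  have h := ((tendsto_const_nhds (x := (1 : ℝ))).sub hn).sub
    ((scl_tendsto.pow 2).add (scl_tendsto'.pow 2))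
  norm_num at h
  refine h.congr' ?_
  filter_upwards [tendsto_fst.eventually (eventually_gt_atTop 1),
    tendsto_snd.eventually (eventually_gt_atTop 1)] with p ha hb
  have h1 := scl_sq (a := p.1) (b := p.2) (by linarith) (by linarith)
  have h2 := scl_sq (a := p.2) (b := p.1) (by linarith) (by linarith)
  have h3 : 1 - (p.1 + p.2 + 1)⁻¹ = p.2 / (p.1 + p.2 + 1) + p.1 / (p.2 + p.1 + 1) := by
    have : 0 < p.1 + p.2 + 1 := by linarith
    rw [add_comm p.2 p.1]
    field_simp
    ring
  linear_combination h3 - h1 - h2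

lemma gDen_exp {a b s : ℝ} (h1 : 0 < 1 + scl a b * s) (h2 : 0 < 1 + -(scl b a * s)) :
    gDen a b s = Real.exp ((a - 1) * Real.log (1 + scl a b * s) +
      (b - 1) * Real.log (1 + -(scl b a * s))) := by
  rw [gDen, if_pos ⟨h1, h2⟩, Real.rpow_def_of_pos h1, Real.rpow_def_of_pos h2, ← Real.exp_add]
  congr 1; ring

lemma gDen_tendsto (s : ℝ) : Tendsto (fun p : ℝ × ℝ => gDen p.1 p.2 s) (atTop ×ˢ atTop)
    (nhds (Real.exp (-s ^ 2 / 2))) := by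
  have hu : Tendsto (fun p : ℝ × ℝ => scl p.1 p.2 * s) (atTop ×ˢ atTop) (nhds 0) := by
    simpa using scl_tendsto.mul_const s
  have hv : Tendsto (fun p : ℝ × ℝ => -(scl p.2 p.1 * s)) (atTop ×ˢ atTop) (nhds 0) := by
    simpa using (scl_tendsto'.mul_const s).neg
  have hu' : ∀ᶠ p : ℝ × ℝ in atTop ×ˢ atTop, |scl p.1 p.2 * s| ≤ 1 / 2 := by
    have := hu.abs
    rw [abs_zero] at this
    exact this.eventually (eventually_le_nhds (by norm_num))
  have hv' : ∀ᶠ p : ℝ × ℝ in atTop ×ˢ atTop, |-(scl p.2 p.1 * s)| ≤ 1 / 2 := by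
    have := hv.abs
    rw [abs_zero] at this
    exact this.eventually (eventually_le_nhds (by norm_num))
  have main : Tendsto (fun p : ℝ × ℝ => (scl p.2 p.1 - scl p.1 p.2) * s -
      ((p.1 - 1) * scl p.1 p.2 ^ 2 + (p.2 - 1) * scl p.2 p.1 ^ 2) * (s ^ 2 / 2))
      (atTop ×ˢ atTop) (nhds (-s ^ 2 / 2)) := by
    have := ((scl_tendsto'.sub scl_tendsto).mul_const s).sub (quad_tendsto.mul_const (s ^ 2 / 2))
    convert this using 2
    ring
  have err : Tendsto (fun p : ℝ × ℝ => ((p.1 - 1) * Real.log (1 + scl p.1 p.2 * s) +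
      (p.2 - 1) * Real.log (1 + -(scl p.2 p.1 * s))) - ((scl p.2 p.1 - scl p.1 p.2) * s -
      ((p.1 - 1) * scl p.1 p.2 ^ 2 + (p.2 - 1) * scl p.2 p.1 ^ 2) * (s ^ 2 / 2)))
      (atTop ×ˢ atTop) (nhds 0) := by
    have hb : Tendsto (fun p : ℝ × ℝ => 2 * |s| ^ 3 * (scl p.1 p.2 + scl p.2 p.1))
        (atTop ×ˢ atTop) (nhds 0) := by
      simpa using (scl_tendsto.add scl_tendsto').const_mul (2 * |s| ^ 3)
    refine squeeze_zero_norm' ?_ hb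
    filter_upwards [hu', hv', tendsto_fst.eventually (eventually_gt_atTop 1),
      tendsto_snd.eventually (eventually_gt_atTop 1)] with p h1 h2 ha hb
    have ha0 : 0 < p.1 := by linarith
    have hb0 : 0 < p.2 := by linarith
    have l1 := log_approx h1
    have l2 := log_approx h2
    have hlin := scl_lin ha0 hb0
    have q : ∀ a b : ℝ, 1 < a → 1 < b →
        (a - 1) * (2 * (scl a b * |s|) ^ 3) ≤ 2 * |s| ^ 3 * scl a b := by
      intro a b ha hb
      have h0 : 0 ≤ scl a b := Real.sqrt_nonneg _
      have e := scl_sq (a := a) (b := b) (by linarith) (by linarith)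
      have : b / (a + b + 1) ≤ 1 := by
        rw [div_le_one (by linarith)]; linarith
      have h4 : (a - 1) * scl a b ^ 2 ≤ 1 := by nlinarith [sq_nonneg (scl a b)]
      calc (a - 1) * (2 * (scl a b * |s|) ^ 3)
          = 2 * |s| ^ 3 * scl a b * ((a - 1) * scl a b ^ 2) := by ring
        _ ≤ 2 * |s| ^ 3 * scl a b * 1 := by gcongr
        _ = _ := by ring
    have q1 := q p.1 p.2 ha hb
    have q2 := q p.2 p.1 hb ha
    rw [abs_neg] at l2
    rw [abs_mul (scl _ _), abs_of_nonneg (show 0 ≤ scl p.1 p.2 from Real.sqrt_nonneg _)] at l1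
    rw [abs_mul (scl _ _), abs_of_nonneg (show 0 ≤ scl p.2 p.1 from Real.sqrt_nonneg _)] at l2
    have m1 := mul_le_mul_of_nonneg_left l1 (show 0 ≤ p.1 - 1 by linarith)
    have m2 := mul_le_mul_of_nonneg_left l2 (show 0 ≤ p.2 - 1 by linarith)
    rw [← abs_of_nonneg (show 0 ≤ p.1 - 1 by linarith), ← abs_mul,
      abs_of_nonneg (show 0 ≤ p.1 - 1 by linarith)] at m1
    rw [← abs_of_nonneg (show 0 ≤ p.2 - 1 by linarith), ← abs_mul,
      abs_of_nonneg (show 0 ≤ p.2 - 1 by linarith)] at m2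
    rw [Real.norm_eq_abs]
    have t := abs_add_le
      ((p.1 - 1) * (Real.log (1 + scl p.1 p.2 * s) - (scl p.1 p.2 * s - (scl p.1 p.2 * s) ^ 2 / 2)))
      ((p.2 - 1) * (Real.log (1 + -(scl p.2 p.1 * s)) -
        (-(scl p.2 p.1 * s) - (-(scl p.2 p.1 * s)) ^ 2 / 2)))
    refine le_trans (le_of_eq ?_) (t.trans (by linarith))
    congr 1
    linear_combination s * hlin
  have tot := (Real.continuous_exp.tendsto _).comp (err.add main)
  rw [zero_add] at tot
  refine tot.congr' ?_
  filter_upwards [hu', hv'] with p h1 h2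
  rw [gDen_exp (by linarith [(abs_le.1 h1).1]) (by linarith [(abs_le.1 h2).1])]
  simp

lemma gDen_bound : ∀ᶠ p : ℝ × ℝ in atTop ×ˢ atTop, ∀ s,
    ‖gDen p.1 p.2 s‖ ≤ Real.exp (1 / 8 - |s| / 16) := by
  filter_upwards [tendsto_fst.eventually (eventually_gt_atTop 1),
    tendsto_snd.eventually (eventually_gt_atTop 1),
    scl_tendsto.eventually (eventually_le_nhds (show (0 : ℝ) < 1 / 16 by norm_num)),
    scl_tendsto'.eventually (eventually_le_nhds (show (0 : ℝ) < 1 / 16 by norm_num)),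
    quad_tendsto.eventually (eventually_ge_nhds (show (1 / 2 : ℝ) < 1 by norm_num))]
    with p ha hb hu hv hq s
  by_cases h : 0 < 1 + scl p.1 p.2 * s ∧ 0 < 1 + -(scl p.2 p.1 * s)
  swap
  · rw [gDen, if_neg h, norm_zero]; positivity
  rw [gDen_exp h.1 h.2, Real.norm_eq_abs, Real.abs_exp, Real.exp_le_exp]
  have hlin := scl_lin (a := p.1) (b := p.2) (by linarith) (by linarith)
  have hu0 : 0 ≤ scl p.1 p.2 := Real.sqrt_nonneg _
  have hv0 : 0 ≤ scl p.2 p.1 := Real.sqrt_nonneg _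
  have q : ∀ c y : ℝ, 0 ≤ c → c ≤ 1 / 16 → |y| = c * |s| → 0 < 1 + y →
      Real.log (1 + y) ≤ y - c ^ 2 * (s ^ 2 / (4 * (1 + |s|))) := by
    intro c y hc hc1 hy hpos
    have := log_bound hpos
    have h2 : c ^ 2 * (s ^ 2 / (4 * (1 + |s|))) ≤ y ^ 2 / (4 * (1 + |y|)) := by
      rw [← mul_div_assoc, ← sq_abs y, ← sq_abs s, ← mul_pow, ← hy]
      have : |y| ≤ |s| := by rw [hy]; nlinarith [abs_nonneg s]
      gcongr
    linarith
  have l1 := q _ _ hu0 hu (by rw [abs_mul, abs_of_nonneg hu0]) h.1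
  have l2 := q _ _ hv0 hv (by rw [abs_neg, abs_mul, abs_of_nonneg hv0]) h.2
  have m1 := mul_le_mul_of_nonneg_left l1 (show 0 ≤ p.1 - 1 by linarith)
  have m2 := mul_le_mul_of_nonneg_left l2 (show 0 ≤ p.2 - 1 by linarith)
  have hs : (|s| - 1) / 4 ≤ s ^ 2 / (4 * (1 + |s|)) := by
    rw [div_le_div_iff₀ (by norm_num) (by positivity), ← sq_abs s]
    nlinarith [abs_nonneg s]
  have hs0 : 0 ≤ s ^ 2 / (4 * (1 + |s|)) := by positivity
  have hqq := mul_le_mul_of_nonneg_right hq hs0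
  have hd : (scl p.2 p.1 - scl p.1 p.2) * s ≤ |s| / 16 := by
    have : |scl p.2 p.1 - scl p.1 p.2| ≤ 1 / 16 := abs_le.2 ⟨by linarith, by linarith⟩
    calc _ ≤ |(scl p.2 p.1 - scl p.1 p.2) * s| := le_abs_self _
      _ = |scl p.2 p.1 - scl p.1 p.2| * |s| := abs_mul _ _
      _ ≤ 1 / 16 * |s| := by gcongr
      _ = _ := by ring
  have hl : s * (p.1 * scl p.1 p.2) = s * (p.2 * scl p.2 p.1) := by rw [hlin]
  nlinarith

lemma gDen_meas (a b : ℝ) : Measurable (gDen a b) := by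
  unfold gDen
  apply Measurable.ite
  · have h1 : Measurable fun s : ℝ => 1 + scl a b * s := by fun_prop
    have h2 : Measurable fun s : ℝ => 1 + -(scl b a * s) := by fun_prop
    exact (measurableSet_lt measurable_const h1).inter (measurableSet_lt measurable_const h2)
  · fun_prop
  · fun_prop

lemma gDen_int_tendsto (S : Set ℝ) : Tendsto (fun p : ℝ × ℝ => ∫ s in S, gDen p.1 p.2 s)
    (atTop ×ˢ atTop) (nhds (∫ s in S, Real.exp (-s ^ 2 / 2))) := by
  refine tendsto_integral_filter_of_dominated_convergence
    (fun s => Real.exp (1 / 8 - |s| / 16)) ?_ ?_ integrable_major.restrict ?_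
  · exact Eventually.of_forall fun p => (gDen_meas p.1 p.2).aestronglyMeasurable
  · filter_upwards [gDen_bound] with p hp
    exact Eventually.of_forall hp
  · exact Eventually.of_forall gDen_tendsto

/-- the rescaled beta distribution functions converge pointwise to the
distribution function of the standard normal distribution as both parameters tend to
infinity. -/
theorem betaCDFrescaled_tendsto_gaussian (x : ℝ) :
    Tendsto (fun p : ℝ × ℝ => betaCDFrescaled p.1 p.2 x) (atTop ×ˢ atTop)
      (nhds ((Real.sqrt (2 * Real.pi))⁻¹ * ∫ t in Set.Iic x, Real.exp (-t ^ 2 / 2))) := by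
  have hg : ∫ s : ℝ, Real.exp (-s ^ 2 / 2) = Real.sqrt (2 * Real.pi) := by
    have := integral_gaussian (1 / 2)
    rw [show Real.pi / (1 / 2) = 2 * Real.pi by ring] at this
    rw [← this]
    congr 1; ext s; congr 1; ring
  have h1 := gDen_int_tendsto Set.univ
  simp only [setIntegral_univ] at h1
  rw [hg] at h1
  have h := (gDen_int_tendsto (Set.Iic x)).div h1 (by positivity)
  rw [← div_eq_inv_mul]
  refine h.congr' ?_
  filter_upwards [tendsto_fst.eventually (eventually_gt_atTop 1),
    tendsto_snd.eventually (eventually_gt_atTop 1)] with p ha hb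
  exact (rescaled_eq ha hb x).symm
end

section
/- Let m < n, let P be a real (m×n)-matrix that is an orthogonal projection (P Pᵗ = I_m), let ξ = m/n, and define φ(ϑ) = √ϑ · exp((1−ϑ)/2). Then for every δ with 0 < δ < ξ, the uniform probability measure of the set {x ∈ S^{n−1} : ‖Px‖² ≤ δ ‖x‖²} is at most φ(δ/ξ)^m, and for every δ with ξ < δ < 1, the uniform probability measure of the set {x ∈ S^{n−1} : ‖Px‖² > δ ‖x‖²} is at most φ(δ/ξ)^m. -/
open MeasureTheory Metric Matrix
open scoped ENNReal

theorem aux_normsq {k : ℕ} (x : EuclideanSpace ℝ (Fin k)) : ‖x‖ ^ 2 = x.ofLp ⬝ᵥ x.ofLp := by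
  rw [EuclideanSpace.real_norm_sq_eq]
  simp [dotProduct, sq]

theorem aux_T {m n : ℕ} (P : Matrix (Fin m) (Fin n) ℝ) (hP : P * Pᵀ = 1) (α β : ℝ)
    (x : EuclideanSpace ℝ (Fin n)) :
    ‖Matrix.toEuclideanLin (β • (1 : Matrix (Fin n) (Fin n) ℝ) + (α - β) • (Pᵀ * P)) x‖ ^ 2 =
      β ^ 2 * ‖x‖ ^ 2 + (α ^ 2 - β ^ 2) * ‖Matrix.toEuclideanLin P x‖ ^ 2 := by
  simp only [aux_normsq, Matrix.ofLp_toLpLin, Matrix.toLin'_apply]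
  generalize x.ofLp = v
  have h1 : v ⬝ᵥ (Pᵀ * P) *ᵥ v = P *ᵥ v ⬝ᵥ P *ᵥ v := by
    rw [← Matrix.mulVec_mulVec, Matrix.dotProduct_mulVec, Matrix.vecMul_transpose]
  have h2 : (Pᵀ * P) *ᵥ v ⬝ᵥ (Pᵀ * P) *ᵥ v = P *ᵥ v ⬝ᵥ P *ᵥ v := by
    rw [← Matrix.mulVec_mulVec, Matrix.dotProduct_mulVec, Matrix.vecMul_transpose,
      Matrix.mulVec_mulVec, hP, Matrix.one_mulVec]
  have h3 : (Pᵀ * P) *ᵥ v ⬝ᵥ v = P *ᵥ v ⬝ᵥ P *ᵥ v := by rw [dotProduct_comm, h1]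
  simp only [Matrix.add_mulVec, Matrix.smul_mulVec, Matrix.one_mulVec, add_dotProduct,
    dotProduct_add, smul_dotProduct, dotProduct_smul, h1, h2, h3, smul_eq_mul]
  ring

theorem aux_det {m n : ℕ} (hmn : m < n) (P : Matrix (Fin m) (Fin n) ℝ) (hP : P * Pᵀ = 1)
    (α β : ℝ) (hβ : 0 < β) :
    (β • (1 : Matrix (Fin n) (Fin n) ℝ) + (α - β) • (Pᵀ * P)).det = α ^ m * β ^ (n - m) := by
  have e : β • (1 : Matrix (Fin n) (Fin n) ℝ) + (α - β) • (Pᵀ * P) =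
      β • (1 + Pᵀ * ((α / β - 1) • P)) := by
    rw [Matrix.mul_smul, smul_add, smul_smul]
    congr 2
    field_simp
  rw [e, Matrix.det_smul, Matrix.det_one_add_mul_comm, Matrix.smul_mul, hP]
  have e2 : (1 : Matrix (Fin m) (Fin m) ℝ) + (α / β - 1) • (1 : Matrix (Fin m) (Fin m) ℝ) =
      (α / β) • 1 := by
    rw [sub_smul, one_smul]; abel
  rw [e2, Matrix.det_smul, Matrix.det_one]
  simp only [Fintype.card_fin]
  obtain ⟨k, rfl⟩ := Nat.exists_eq_add_of_lt hmn
  have : m + k + 1 - m = k + 1 := by omega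
  rw [this, div_pow]
  field_simp
  ring

open scoped Pointwise in
theorem aux_measure {m n : ℕ} (hmn : m < n) (P : Matrix (Fin m) (Fin n) ℝ) (hP : P * Pᵀ = 1)
    (α β : ℝ) (hα : 0 < α) (hβ : 0 < β) (S : Set (sphere (0 : EuclideanSpace ℝ (Fin n)) 1))
    (hS : MeasurableSet S)
    (h : ∀ x ∈ S, β ^ 2 + (α ^ 2 - β ^ 2) *
      ‖Matrix.toEuclideanLin P (x : EuclideanSpace ℝ (Fin n))‖ ^ 2 ≤ 1) :
    (((n : ℝ≥0∞) * volume (ball (0 : EuclideanSpace ℝ (Fin n)) 1))⁻¹ •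
          (volume : Measure (EuclideanSpace ℝ (Fin n))).toSphere) S ≤
      ENNReal.ofReal ((α ^ m * β ^ (n - m))⁻¹) := by
  set M := β • (1 : Matrix (Fin n) (Fin n) ℝ) + (α - β) • (Pᵀ * P) with hM
  have hdet : LinearMap.det (Matrix.toEuclideanLin M) = α ^ m * β ^ (n - m) := by
    rw [← aux_det hmn P hP α β hβ, ← hM, Matrix.toEuclideanLin_eq_toLin_orthonormal,
      LinearMap.det_toLin]
  have hpos : 0 < α ^ m * β ^ (n - m) := by positivity
  have hsub : (Set.Ioo (0 : ℝ) 1 • (Set.image Subtype.val S : Set (EuclideanSpace ℝ (Fin n)))) ⊆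
      Set.preimage (Matrix.toEuclideanLin M) (ball 0 1) := by
    rintro _ ⟨r, hr, _, ⟨x, hx, rfl⟩, rfl⟩
    have hx1 : ‖(x : EuclideanSpace ℝ (Fin n))‖ = 1 := by simp
    have h1 : ‖Matrix.toEuclideanLin M (x : EuclideanSpace ℝ (Fin n))‖ ≤ 1 := by
      have := aux_T P hP α β x
      rw [← hM, hx1] at this
      have h2 := h x hx
      rw [← sq_le_one_iff₀ (norm_nonneg _)]
      linarith
    simp only [Set.mem_preimage, mem_ball_zero_iff, map_smul, norm_smul, Real.norm_eq_abs,
      abs_of_pos hr.1]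
    nlinarith [hr.1, hr.2]
  have hvol := measure_mono (μ := volume) hsub
  rw [Measure.addHaar_preimage_linearMap _ (by rw [hdet]; exact hpos.ne'), hdet,
    abs_of_pos (inv_pos.2 hpos)] at hvol
  rw [Measure.smul_apply, Measure.toSphere_apply' _ hS, smul_eq_mul, finrank_euclideanSpace,
    Fintype.card_fin]
  have hn0 : (n : ℝ≥0∞) ≠ 0 := by exact_mod_cast (by omega : n ≠ 0)
  have hb0 : volume (ball (0 : EuclideanSpace ℝ (Fin n)) 1) ≠ 0 :=
    (measure_ball_pos _ _ one_pos).ne'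
  have hbt : volume (ball (0 : EuclideanSpace ℝ (Fin n)) 1) ≠ ⊤ := measure_ball_lt_top.ne
  calc _ ≤ ((n : ℝ≥0∞) * volume (ball (0 : EuclideanSpace ℝ (Fin n)) 1))⁻¹ *
        (n * (ENNReal.ofReal ((α ^ m * β ^ (n - m))⁻¹) *
          volume (ball (0 : EuclideanSpace ℝ (Fin n)) 1))) := by gcongr
    _ = ((n : ℝ≥0∞) * volume (ball (0 : EuclideanSpace ℝ (Fin n)) 1))⁻¹ *
        ((n : ℝ≥0∞) * volume (ball (0 : EuclideanSpace ℝ (Fin n)) 1)) *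
        ENNReal.ofReal ((α ^ m * β ^ (n - m))⁻¹) := by ring
    _ ≤ _ := by
      rw [ENNReal.inv_mul_cancel (mul_ne_zero hn0 hb0)
        (ENNReal.mul_ne_top (ENNReal.natCast_ne_top n) hbt), one_mul]

theorem aux_bound {m n : ℕ} (hm : 0 < m) (hmn : m < n) (δ ξ : ℝ) (hξ : ξ = (m : ℝ) / n)
    (h0 : 0 < δ) (h1 : δ < 1) :
    (Real.sqrt (ξ / δ) ^ m * Real.sqrt ((1 - ξ) / (1 - δ)) ^ (n - m))⁻¹ ≤
      (Real.sqrt (δ / ξ) * Real.exp ((1 - δ / ξ) / 2)) ^ m := by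
  have hm' : (0 : ℝ) < m := by exact_mod_cast hm
  have hmn' : (m : ℝ) < n := by exact_mod_cast hmn
  have hn' : (0 : ℝ) < n := by linarith
  have hξ0 : 0 < ξ := by rw [hξ]; positivity
  have hξ1 : ξ < 1 := by rw [hξ, div_lt_one hn']; exact hmn'
  have h1ξ : 0 < 1 - ξ := by linarith
  rw [mul_inv, ← inv_pow, ← inv_pow, ← Real.sqrt_inv, ← Real.sqrt_inv, inv_div, inv_div, mul_pow]
  gcongr
  have key : Real.sqrt ((1 - δ) / (1 - ξ)) ≤ Real.exp ((ξ - δ) / (1 - ξ) / 2) := by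
    rw [Real.exp_half]
    apply Real.sqrt_le_sqrt
    have := Real.add_one_le_exp ((ξ - δ) / (1 - ξ))
    have e : (1 - δ) / (1 - ξ) = (ξ - δ) / (1 - ξ) + 1 := by field_simp; ring
    rw [e]; exact this
  refine (pow_le_pow_left₀ (Real.sqrt_nonneg _) key _).trans (le_of_eq ?_)
  rw [← Real.exp_nat_mul, ← Real.exp_nat_mul, Nat.cast_sub hmn.le]
  congr 1
  have hmξ : (m : ℝ) = n * ξ := by rw [hξ]; field_simp
  rw [hmξ]
  field_simp

/-- concentration of measure for orthogonal projections. For an orthogonal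
projection `P : ℝⁿ → ℝᵐ`, `ξ = m/n` and `φ(ϑ) = √ϑ e^{(1−ϑ)/2}`, the uniform probability
of `{x ∈ S^{n−1} : ‖Px‖² ≤ δ‖x‖²}` is at most `φ(δ/ξ)^m` for `0 < δ < ξ`, and the
probability of `{x ∈ S^{n−1} : ‖Px‖² > δ‖x‖²}` is at most `φ(δ/ξ)^m` for `ξ < δ < 1`. -/
theorem projection_measure_concentration (m n : ℕ) (hm : 0 < m) (hmn : m < n)
    (P : Matrix (Fin m) (Fin n) ℝ) (hP : P * Pᵀ = 1)
    (ξ : ℝ) (hξ : ξ = (m : ℝ) / n)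
    (φ : ℝ → ℝ) (hφ : ∀ ϑ : ℝ, φ ϑ = Real.sqrt ϑ * Real.exp ((1 - ϑ) / 2)) :
    (∀ δ : ℝ, 0 < δ → δ < ξ →
      (((n : ℝ≥0∞) * volume (ball (0 : EuclideanSpace ℝ (Fin n)) 1))⁻¹ •
          (volume : Measure (EuclideanSpace ℝ (Fin n))).toSphere)
        {x : sphere (0 : EuclideanSpace ℝ (Fin n)) 1 |
          ‖Matrix.toEuclideanLin P (x : EuclideanSpace ℝ (Fin n))‖ ^ 2 ≤
            δ * ‖(x : EuclideanSpace ℝ (Fin n))‖ ^ 2} ≤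
        ENNReal.ofReal (φ (δ / ξ) ^ m)) ∧
    (∀ δ : ℝ, ξ < δ → δ < 1 →
      (((n : ℝ≥0∞) * volume (ball (0 : EuclideanSpace ℝ (Fin n)) 1))⁻¹ •
          (volume : Measure (EuclideanSpace ℝ (Fin n))).toSphere)
        {x : sphere (0 : EuclideanSpace ℝ (Fin n)) 1 |
          δ * ‖(x : EuclideanSpace ℝ (Fin n))‖ ^ 2 <
            ‖Matrix.toEuclideanLin P (x : EuclideanSpace ℝ (Fin n))‖ ^ 2} ≤
        ENNReal.ofReal (φ (δ / ξ) ^ m)) := by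
  have hm' : (0 : ℝ) < m := by exact_mod_cast hm
  have hmn' : (m : ℝ) < n := by exact_mod_cast hmn
  have hn' : (0 : ℝ) < n := by linarith
  have hξ0 : 0 < ξ := by rw [hξ]; positivity
  have hξ1 : ξ < 1 := by rw [hξ, div_lt_one hn']; exact hmn'
  have h1ξ : 0 < 1 - ξ := by linarith
  have hcont : Continuous fun x : sphere (0 : EuclideanSpace ℝ (Fin n)) 1 =>
      ‖Matrix.toEuclideanLin P (x : EuclideanSpace ℝ (Fin n))‖ ^ 2 :=
    (((LinearMap.continuous_of_finiteDimensional (Matrix.toEuclideanLin P)).comp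
      continuous_subtype_val).norm).pow 2
  have hcont2 (δ : ℝ) : Continuous fun x : sphere (0 : EuclideanSpace ℝ (Fin n)) 1 =>
      δ * ‖(x : EuclideanSpace ℝ (Fin n))‖ ^ 2 := by fun_prop
  constructor
  · intro δ h0 h1
    have h1δ : 0 < 1 - δ := by linarith
    have hα : 0 < ξ / δ := by positivity
    have hβ : 0 < (1 - ξ) / (1 - δ) := by positivity
    rw [hφ]
    refine (aux_measure hmn P hP _ _ (Real.sqrt_pos.2 hα) (Real.sqrt_pos.2 hβ) _
      (measurableSet_le hcont.measurable (hcont2 δ).measurable) ?_).trans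
      (ENNReal.ofReal_le_ofReal (aux_bound hm hmn δ ξ hξ h0 (by linarith)))
    intro x hx
    have hx1 : ‖(x : EuclideanSpace ℝ (Fin n))‖ = 1 := by simp
    simp only [Set.mem_setOf_eq, hx1] at hx
    rw [Real.sq_sqrt hα.le, Real.sq_sqrt hβ.le]
    have hd : 0 ≤ ξ / δ - (1 - ξ) / (1 - δ) := by
      rw [sub_nonneg, div_le_div_iff₀ h1δ h0]; nlinarith
    have e : (1 - ξ) / (1 - δ) + (ξ / δ - (1 - ξ) / (1 - δ)) * δ = 1 := by field_simp; ring
    nlinarith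
  · intro δ h0 h1
    have h0δ : 0 < δ := by linarith
    have h1δ : 0 < 1 - δ := by linarith
    have hα : 0 < ξ / δ := by positivity
    have hβ : 0 < (1 - ξ) / (1 - δ) := by positivity
    rw [hφ]
    refine (aux_measure hmn P hP _ _ (Real.sqrt_pos.2 hα) (Real.sqrt_pos.2 hβ) _
      (measurableSet_lt (hcont2 δ).measurable hcont.measurable) ?_).trans
      (ENNReal.ofReal_le_ofReal (aux_bound hm hmn δ ξ hξ h0δ (by linarith)))
    intro x hx
    have hx1 : ‖(x : EuclideanSpace ℝ (Fin n))‖ = 1 := by simp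
    simp only [Set.mem_setOf_eq, hx1] at hx
    rw [Real.sq_sqrt hα.le, Real.sq_sqrt hβ.le]
    have hd : ξ / δ - (1 - ξ) / (1 - δ) ≤ 0 := by
      rw [sub_nonpos, div_le_div_iff₀ h0δ h1δ]; nlinarith
    have e : (1 - ξ) / (1 - δ) + (ξ / δ - (1 - ξ) / (1 - δ)) * δ = 1 := by field_simp; ring
    nlinarith
end

section
/- For parameters α, β > 0 define V = β/(α(α+β+1)) and Z = 2β(β−α)/(α²(α+β+1)(α+β+2)) (the variance and the third-order central moment of the beta distribution with parameters α and β rescaled to expected value one). Then −(1−V)/2 < Z/(2V) < V, one has 1 − Vα > 0, and α and β can be recovered from V and Z via α = 2(Z + V(1−V))/(4V² − (1−V)Z) and β = Vα(α+1)/(1−Vα). Conversely, for any given V > 0 and Z satisfying −(1−V)/2 < Z/(2V) < V, there exist α, β > 0 such that V = β/(α(α+β+1)) and Z = 2β(β−α)/(α²(α+β+1)(α+β+2)). -/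
/-- The variance of the beta distribution with parameters `a`, `b` rescaled to expected
value one. -/
noncomputable def rescaledBetaVar (a b : ℝ) : ℝ := b / (a * (a + b + 1))

/-- The third-order central moment of the beta distribution with parameters `a`, `b`
rescaled to expected value one. -/
noncomputable def rescaledBetaThird (a b : ℝ) : ℝ :=
  2 * b * (b - a) / (a ^ 2 * (a + b + 1) * (a + b + 2))

/-- the variance `V` and third central moment `Z` of the rescaled beta
distribution satisfy `−(1−V)/2 < Z/(2V) < V` and `1 − Vα > 0`, the parameters can be
recovered by `α = 2(Z+V(1−V))/(4V²−(1−V)Z)` and `β = Vα(α+1)/(1−Vα)`, and conversely any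
`V > 0` and `Z` satisfying these inequalities arise from some parameters `α, β > 0`. -/
theorem rescaledBeta_moment_characterization :
    (∀ a b : ℝ, 0 < a → 0 < b →
      -(1 - rescaledBetaVar a b) / 2 < rescaledBetaThird a b / (2 * rescaledBetaVar a b) ∧
      rescaledBetaThird a b / (2 * rescaledBetaVar a b) < rescaledBetaVar a b ∧
      0 < 1 - rescaledBetaVar a b * a ∧
      a = 2 * (rescaledBetaThird a b + rescaledBetaVar a b * (1 - rescaledBetaVar a b)) /
        (4 * rescaledBetaVar a b ^ 2 - (1 - rescaledBetaVar a b) * rescaledBetaThird a b) ∧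
      b = rescaledBetaVar a b * a * (a + 1) / (1 - rescaledBetaVar a b * a)) ∧
    (∀ V Z : ℝ, 0 < V → -(1 - V) / 2 < Z / (2 * V) → Z / (2 * V) < V →
      ∃ a b : ℝ, 0 < a ∧ 0 < b ∧ V = rescaledBetaVar a b ∧ Z = rescaledBetaThird a b) := by
  constructor
  · intro a b ha hb
    have hs1 : 0 < a + b + 1 := by positivity
    have hs2 : 0 < a + b + 2 := by positivity
    have hw : rescaledBetaThird a b / (2 * rescaledBetaVar a b)
        = (b - a) / (a * (a + b + 2)) := by
      unfold rescaledBetaThird rescaledBetaVar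
      field_simp
    have e3 : 1 - rescaledBetaVar a b * a = (a + 1) / (a + b + 1) := by
      unfold rescaledBetaVar
      field_simp
      ring
    have e4 : 4 * rescaledBetaVar a b ^ 2 - (1 - rescaledBetaVar a b) * rescaledBetaThird a b
        = 2 * b * (a + b) ^ 2 * (1 + a) / (a ^ 3 * (a + b + 1) ^ 2 * (a + b + 2)) := by
      unfold rescaledBetaThird rescaledBetaVar
      field_simp
      ring
    have e5 : rescaledBetaThird a b + rescaledBetaVar a b * (1 - rescaledBetaVar a b)
        = b * (a + b) ^ 2 * (1 + a) / (a ^ 2 * (a + b + 1) ^ 2 * (a + b + 2)) := by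
      unfold rescaledBetaThird rescaledBetaVar
      field_simp
      ring
    refine ⟨?_, ?_, ?_, ?_, ?_⟩
    · rw [hw, ← sub_pos]
      have : (b - a) / (a * (a + b + 2)) - -(1 - rescaledBetaVar a b) / 2
          = (a + b) ^ 2 * (1 + a) / (2 * a * (a + b + 1) * (a + b + 2)) := by
        unfold rescaledBetaVar
        field_simp
        ring
      rw [this]
      positivity
    · rw [hw, ← sub_pos]
      have : rescaledBetaVar a b - (b - a) / (a * (a + b + 2))
          = (b + a * (a + b) + a) / (a * (a + b + 1) * (a + b + 2)) := by
        unfold rescaledBetaVar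
        field_simp
        ring
      rw [this]
      positivity
    · rw [e3]
      positivity
    · rw [e4, e5]
      field_simp
    · rw [e3]
      unfold rescaledBetaVar
      field_simp
  · intro V Z hV h1 h2
    obtain ⟨w, hw⟩ : ∃ w, w = Z / (2 * V) := ⟨_, rfl⟩
    have hZ : Z = 2 * V * w := by
      rw [hw]
      field_simp
    rw [← hw] at h1 h2
    have hN : 0 < 2 * w + 1 - V := by linarith
    have hD : 0 < 2 * V - (1 - V) * w := by
      rcases le_or_gt V 1 with h | h
      · nlinarith [mul_nonneg (sub_nonneg.2 h) (sub_nonneg.2 h2.le), mul_pos hV hV]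
      · nlinarith [mul_pos (sub_pos.2 h) (show 0 < w by linarith)]
    obtain ⟨a, hadef⟩ : ∃ a, a = (2 * w + 1 - V) / (2 * V - (1 - V) * w) := ⟨_, rfl⟩
    have ha : 0 < a := by
      rw [hadef]
      positivity
    have hrel : a * (2 * V - (1 - V) * w) = 2 * w + 1 - V := by
      rw [hadef]
      exact div_mul_cancel₀ _ hD.ne'
    have hc : 0 < 1 - V * a := by
      have : (1 - V * a) * (2 * V - (1 - V) * w) = (V - w) * (1 + V) := by
        linear_combination (-V) * hrel
      have h3 : 0 < (1 - V * a) * (2 * V - (1 - V) * w) := by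
        rw [this]
        exact mul_pos (by linarith) (by linarith)
      exact pos_of_mul_pos_left h3 hD.le
    obtain ⟨b, hbdef⟩ : ∃ b, b = V * a * (a + 1) / (1 - V * a) := ⟨_, rfl⟩
    have hb : 0 < b := by
      rw [hbdef]
      positivity
    have hbrel : b * (1 - V * a) = V * a * (a + 1) := by
      rw [hbdef]
      field_simp
    have hs1 : 0 < a + b + 1 := by positivity
    have hs2 : 0 < a + b + 2 := by positivity
    have hVe : V = b / (a * (a + b + 1)) := by
      rw [eq_div_iff (by positivity)]
      linear_combination -hbrel
    have hwe : w = (b - a) / (a * (a + b + 2)) := by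
      rw [eq_div_iff (by positivity)]
      apply mul_right_cancel₀ hc.ne'
      linear_combination (w * a - 1) * hbrel - a * hrel
    refine ⟨a, b, ha, hb, hVe, ?_⟩
    rw [hZ, hwe]
    unfold rescaledBetaThird
    rw [hVe]
    field_simp
end
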